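/- Suppose S = N. If x̂ : ℝ^N → ℝ^N is a measurable estimator that is unbiased (here X_N = ℝ^N, so ∫ x̂(y)_i dP_x(y) = x_i for all x ∈ ℝ^N and all i) and has bounded MSE (there exists C < ∞ with ε(x; x̂) ≤ C for all x ∈ ℝ^N), then x̂ coincides with the least-squares estimator x̂_LS(y) = y almost everywhere with respect to Lebesgue measure on ℝ^N (equivalently, P_x-almost everywhere for every x). -/

import Mathlib

open MeasureTheory ProbabilityTheory Filter
open scoped ENNReal Classical

/-- The product Gaussian measure `P_x` on `ℝ^N` with mean `x` and variance `σ²` per coordinate. -/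
noncomputable def gaussP (N : ℕ) (σ : ℝ) (x : Fin N → ℝ) : Measure (Fin N → ℝ) :=
  MeasureTheory.Measure.pi fun i => gaussianReal (x i) (Real.toNNReal (σ ^ 2))

/-- The support of `x`: indices with nonzero entries. Its cardinality is `‖x‖₀`. -/
noncomputable def supp {N : ℕ} (x : Fin N → ℝ) : Finset (Fin N) :=
  Finset.univ.filter fun i => x i ≠ 0

/-- The sparse parameter set `X_S = {x : ‖x‖₀ ≤ S}`. -/
def sparseSet (N S : ℕ) : Set (Fin N → ℝ) := {x | (supp x).card ≤ S}

/-- An estimator is unbiased if each component is `P_x`-integrable with mean `x i`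
for every `x ∈ X_S`. -/
def Unbiased (N S : ℕ) (σ : ℝ) (est : (Fin N → ℝ) → Fin N → ℝ) : Prop :=
  ∀ x ∈ sparseSet N S, ∀ i,
    Integrable (fun y => est y i) (gaussP N σ x) ∧
    (∫ y, est y i ∂gaussP N σ x) = x i

/-- The MSE `ε(x; x̂) = ∫ ‖x̂(y) − x‖₂² dP_x(y)`, as an extended real. -/
noncomputable def MSE (N : ℕ) (σ : ℝ) (est : (Fin N → ℝ) → Fin N → ℝ)
    (x : Fin N → ℝ) : ℝ≥0∞ :=
  ∫⁻ y, ENNReal.ofReal (∑ i, (est y i - x i) ^ 2) ∂gaussP N σ x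

/-! Translating a Gaussian is the same as exponentially tilting it: completing the square turns
`P_0` tilted by a linear functional `L` into `P_x` with `x_i = σ² L(e_i)`. Unbiasedness for every
`x` therefore says that the Laplace transform of the signed measure `(est y i - y i) dP_0(y)`
vanishes at every real linear functional. The positive and negative parts of this signed measure
have the same moment-generating functions; by analytic continuation to imaginary exponents they have
the same characteristic function, so they coincide and `est y i = y i` almost everywhere. -/

section SignedDensity

variable {α : Type*} {mα : MeasurableSpace α} {ρ : Measure α} {f : α → ℝ}
  {E : Type*} [NormedAddCommGroup E] [NormedSpace ℝ E] {g : α → E}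

lemma integrable_max_zero_smul (hf : AEMeasurable f ρ) (hfg : Integrable (fun a ↦ f a • g a) ρ) :
    Integrable (fun a ↦ max (f a) 0 • g a) ρ := by
  have hindicator : (fun a ↦ max (f a) 0 • g a) = {a | 0 < f a}.indicator fun a ↦ f a • g a := by
    ext a
    rcases lt_or_ge 0 (f a) with ha | ha
    · simp [ha, ha.le]
    · simp [ha]
  rw [hindicator]
  exact hfg.indicator₀ (nullMeasurableSet_lt aemeasurable_const hf)

lemma integrable_withDensity_ofReal
    (hf : AEMeasurable f ρ) (hfg : Integrable (fun a ↦ f a • g a) ρ) :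
    Integrable g (ρ.withDensity fun a ↦ ENNReal.ofReal (f a)) := by
  rw [integrable_withDensity_iff_integrable_smul₀' hf.ennreal_ofReal (by simp)]
  simpa only [ENNReal.toReal_ofReal'] using integrable_max_zero_smul hf hfg

lemma integral_withDensity_ofReal_sub
    (hf : AEMeasurable f ρ) (hfg : Integrable (fun a ↦ f a • g a) ρ) :
    ∫ a, g a ∂(ρ.withDensity fun a ↦ ENNReal.ofReal (f a))
        - ∫ a, g a ∂(ρ.withDensity fun a ↦ ENNReal.ofReal (-f a))
      = ∫ a, f a • g a ∂ρ := by
  have hf_neg : AEMeasurable (fun a ↦ -f a) ρ := hf.neg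
  have hfg_neg : Integrable (fun a ↦ -f a • g a) ρ := by simpa only [neg_smul] using! hfg.neg
  rw [integral_withDensity_eq_integral_toReal_smul₀ hf.ennreal_ofReal (by simp),
    integral_withDensity_eq_integral_toReal_smul₀ hf_neg.ennreal_ofReal (by simp)]
  simp only [ENNReal.toReal_ofReal']
  rw [← integral_sub (integrable_max_zero_smul hf hfg) (integrable_max_zero_smul hf_neg hfg_neg)]
  simp only [← sub_smul, max_zero_sub_max_neg_zero_eq_self]

lemma ae_eq_zero_of_withDensity_ofReal_eq (hf : Integrable f ρ)
    (h : (ρ.withDensity fun a ↦ ENNReal.ofReal (f a))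
      = ρ.withDensity fun a ↦ ENNReal.ofReal (-f a)) :
    f =ᵐ[ρ] 0 := by
  have hae := (withDensity_eq_iff hf.aemeasurable.ennreal_ofReal
    hf.aemeasurable.neg.ennreal_ofReal hf.lintegral_lt_top.ne).1 h
  filter_upwards [hae] with a ha
  simp only [Pi.neg_apply] at ha
  rcases le_total 0 (f a) with h0 | h0
  · rw [ENNReal.ofReal_of_nonpos (neg_nonpos.2 h0), ENNReal.ofReal_eq_zero] at ha
    exact le_antisymm ha h0
  · rw [ENNReal.ofReal_of_nonpos h0, eq_comm, ENNReal.ofReal_eq_zero] at ha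
    exact le_antisymm h0 (neg_nonpos.1 ha)

end SignedDensity

section LaplaceTransform

variable {E : Type*} [NormedAddCommGroup E] [NormedSpace ℝ E] [CompleteSpace E]
  [SecondCountableTopology E] [MeasurableSpace E] [BorelSpace E]

lemma ext_of_mgf_strongDual_eq {μ ν : Measure E} [IsFiniteMeasure μ] [IsFiniteMeasure ν]
    (h_int : ∀ L : StrongDual ℝ E, 0 ∈ interior (integrableExpSet L μ))
    (h : ∀ L : StrongDual ℝ E, mgf L μ = mgf L ν) : μ = ν := by
  have hzero : μ = 0 ↔ ν = 0 := by
    have hmass : μ.real Set.univ = ν.real Set.univ := by simpa [mgf] using congrFun (h 0) 0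
    rw [← Measure.measure_univ_eq_zero, ← Measure.measure_univ_eq_zero (μ := ν),
      ← measureReal_eq_zero_iff, ← measureReal_eq_zero_iff, hmass]
  refine Measure.ext_of_charFunDual (funext fun L ↦ ?_)
  have hI := eqOn_complexMGF_of_mgf' (h L) hzero (x := Complex.I) (by simpa using h_int L)
  simpa [complexMGF, charFunDual_apply, mul_comm] using hI

lemma ae_eq_zero_of_forall_integral_mul_exp_eq_zero {ρ : Measure E} {f : E → ℝ}
    (h_int : ∀ L : StrongDual ℝ E, Integrable (fun y ↦ f y * Real.exp (L y)) ρ)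
    (h : ∀ L : StrongDual ℝ E, ∫ y, f y * Real.exp (L y) ∂ρ = 0) : f =ᵐ[ρ] 0 := by
  have hf : Integrable f ρ := by simpa using h_int 0
  have := isFiniteMeasure_withDensity_ofReal hf.2
  have := isFiniteMeasure_withDensity_ofReal hf.neg.2
  refine ae_eq_zero_of_withDensity_ofReal_eq hf (ext_of_mgf_strongDual_eq (fun L ↦ ?_) fun L ↦ ?_)
  · have huniv : integrableExpSet L (ρ.withDensity fun y ↦ ENNReal.ofReal (f y)) = Set.univ :=
      Set.eq_univ_of_forall fun t ↦ integrable_withDensity_ofReal hf.aemeasurable (h_int (t • L))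
    simp [huniv]
  · ext t
    exact sub_eq_zero.1 ((integral_withDensity_ofReal_sub hf.aemeasurable (h_int (t • L))).trans
      (h (t • L)))

lemma ae_eq_zero_of_forall_integral_tilted_eq_zero {ρ : Measure E} {f : E → ℝ}
    (hexp : ∀ L : StrongDual ℝ E, Integrable (fun y ↦ Real.exp (L y)) ρ)
    (h_int : ∀ L : StrongDual ℝ E, Integrable f (ρ.tilted L))
    (h : ∀ L : StrongDual ℝ E, ∫ y, f y ∂(ρ.tilted L) = 0) : f =ᵐ[ρ] 0 := by
  rcases eq_zero_or_neZero ρ with rfl | _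
  · simp [EventuallyEq]
  refine ae_eq_zero_of_forall_integral_mul_exp_eq_zero (fun L ↦ ?_) fun L ↦ ?_
  · simpa [mul_comm] using (integrable_tilted_iff (hexp L) f).1 (h_int L)
  · have hL := h L
    simp_rw [integral_tilted, smul_eq_mul, div_mul_eq_mul_div, integral_div, mul_comm _ (f _)] at hL
    exact (div_eq_zero_iff.1 hL).resolve_right (integral_exp_pos (hexp L)).ne'

end LaplaceTransform

section Tilted

variable {α : Type*} {mα : MeasurableSpace α}

lemma tilted_add_const (μ : Measure α) (f : α → ℝ) (c : ℝ) :
    μ.tilted (fun a ↦ f a + c) = μ.tilted f := by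
  simp_rw [Measure.tilted, Real.exp_add, integral_mul_const,
    mul_div_mul_right _ _ (Real.exp_ne_zero c)]

lemma pi_tilted {ι : Type*} [Fintype ι] {X : ι → Type*} [∀ i, MeasurableSpace (X i)]
    (μ : ∀ i, Measure (X i)) [∀ i, SigmaFinite (μ i)] (f : ∀ i, X i → ℝ) :
    Measure.pi (fun i ↦ (μ i).tilted (f i))
      = (Measure.pi μ).tilted fun y ↦ ∑ i, f i (y i) := by
  refine Measure.pi_eq fun s hs ↦ ?_
  simp_rw [tilted_apply_eq_ofReal_integral' _ (MeasurableSet.univ_pi hs),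
    tilted_apply_eq_ofReal_integral' _ (hs _), Measure.restrict_pi_pi, integral_div, Real.exp_sum]
  rw [← ENNReal.ofReal_prod_of_nonneg fun i _ ↦ by positivity, Finset.prod_div_distrib,
    integral_fintype_prod_eq_prod (fun i y ↦ Real.exp (f i y)),
    integral_fintype_prod_eq_prod (fun i y ↦ Real.exp (f i y))]

lemma integrable_exp_of_tilted_eq {μ ν : Measure α} [NeZero ν] {f : α → ℝ}
    (h : μ.tilted f = ν) : Integrable (fun a ↦ Real.exp (f a)) μ := by
  by_contra hf
  exact NeZero.ne ν (h.symm.trans (tilted_of_not_integrable hf))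

end Tilted

section Gaussian

open scoped NNReal

lemma gaussianReal_eq_tilted_volume (m : ℝ) {v : ℝ≥0} (hv : v ≠ 0) :
    gaussianReal m v = volume.tilted fun y ↦ -(y - m) ^ 2 / (2 * v) := by
  have hconst : ∫ y : ℝ, Real.exp (-(y - m) ^ 2 / (2 * v)) = √(2 * Real.pi * v) := by
    have hone := integral_gaussianPDFReal_eq_one m hv
    simp only [gaussianPDFReal, integral_const_mul] at hone
    exact (eq_of_inv_mul_eq_one hone).symm
  rw [gaussianReal_of_var_ne_zero _ hv, Measure.tilted, hconst]
  simp only [gaussianPDF_def, gaussianPDFReal, div_eq_inv_mul]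

lemma tilted_gaussianReal (m : ℝ) (v : ℝ≥0) (t : ℝ) :
    (gaussianReal m v).tilted (fun y ↦ t * y) = gaussianReal (m + v * t) v := by
  rcases eq_or_ne v 0 with rfl | hv
  · simp [Measure.tilted, dirac_withDensity]
  have hexp := integrable_exp_of_tilted_eq (gaussianReal_eq_tilted_volume m hv).symm
  have hsquare (y : ℝ) : -(y - m) ^ 2 / (2 * v) + t * y
      = -(y - (m + v * t)) ^ 2 / (2 * v) + (t * m + v * t ^ 2 / 2) := by
    field
  calc (gaussianReal m v).tilted (fun y ↦ t * y)
      = volume.tilted fun y ↦ -(y - m) ^ 2 / (2 * v) + t * y := by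
        rw [gaussianReal_eq_tilted_volume m hv, tilted_tilted hexp]
        rfl
    _ = volume.tilted fun y ↦ -(y - (m + v * t)) ^ 2 / (2 * v) + (t * m + v * t ^ 2 / 2) := by
        simp only [hsquare]
    _ = gaussianReal (m + v * t) v := by
        rw [tilted_add_const, ← gaussianReal_eq_tilted_volume _ hv]

variable {ι : Type*} [Fintype ι] {v : ι → ℝ≥0}

lemma tilted_pi_gaussianReal [DecidableEq ι] (m : ι → ℝ) (L : StrongDual ℝ (ι → ℝ)) :
    (Measure.pi fun i ↦ gaussianReal (m i) (v i)).tilted L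
      = Measure.pi fun i ↦ gaussianReal (m i + v i * L (Pi.single i 1)) (v i) := by
  have hL : ⇑L = fun y ↦ ∑ i, L (Pi.single i 1) * y i := by
    ext y
    conv_lhs => rw [pi_eq_sum_univ' y, map_sum]
    simp only [map_smul, smul_eq_mul, mul_comm]
  simp_rw [← tilted_gaussianReal, pi_tilted, ← hL]

lemma integrable_exp_strongDual_pi_gaussianReal (m : ι → ℝ) (L : StrongDual ℝ (ι → ℝ)) :
    Integrable (fun y ↦ Real.exp (L y)) (Measure.pi fun i ↦ gaussianReal (m i) (v i)) :=
  integrable_exp_of_tilted_eq (tilted_pi_gaussianReal m L)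

lemma volume_absolutelyContinuous_pi_gaussianReal (m : ι → ℝ) (hv : ∀ i, v i ≠ 0) :
    volume ≪ Measure.pi fun i ↦ gaussianReal (m i) (v i) := by
  have htilted : (volume.tilted fun y : ι → ℝ ↦ ∑ i, -(y i - m i) ^ 2 / (2 * v i))
      = Measure.pi fun i ↦ gaussianReal (m i) (v i) := by
    simp_rw [gaussianReal_eq_tilted_volume _ (hv _), pi_tilted, volume_pi]
  rw [← htilted]
  exact absolutelyContinuous_tilted (integrable_exp_of_tilted_eq htilted)

lemma ae_eq_zero_of_forall_integral_pi_gaussianReal_eq_zero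
    (hv : ∀ i, v i ≠ 0) {f : (ι → ℝ) → ℝ}
    (h_int : ∀ m : ι → ℝ, Integrable f (Measure.pi fun i ↦ gaussianReal (m i) (v i)))
    (h : ∀ m : ι → ℝ, ∫ y, f y ∂(Measure.pi fun i ↦ gaussianReal (m i) (v i)) = 0) :
    f =ᵐ[volume] 0 := by
  refine (volume_absolutelyContinuous_pi_gaussianReal 0 hv).ae_eq
    (ae_eq_zero_of_forall_integral_tilted_eq_zero
      (integrable_exp_strongDual_pi_gaussianReal 0) (fun L ↦ ?_) fun L ↦ ?_)
  · rw [tilted_pi_gaussianReal]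
    exact h_int _
  · rw [tilted_pi_gaussianReal]
    exact h _

end Gaussian

theorem stmt_0_general (N : ℕ) (σ : ℝ) (hσ : σ ≠ 0) (est : (Fin N → ℝ) → Fin N → ℝ)
    (hunb : Unbiased N N σ est) :
    ∀ᵐ y ∂(volume : Measure (Fin N → ℝ)), est y = y := by
  have hv : Real.toNNReal (σ ^ 2) ≠ 0 := (Real.toNNReal_pos.2 (by positivity)).ne'
  have hest (x : Fin N → ℝ) (i : Fin N) := hunb x (by
    simpa [sparseSet] using Finset.card_le_univ (supp x)) i
  have hcoord (x : Fin N → ℝ) (i : Fin N) : Integrable (fun y ↦ y i) (gaussP N σ x) :=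
    integrable_eval ((memLp_id_gaussianReal 1).integrable le_rfl)
  have hmean (x : Fin N → ℝ) (i : Fin N) : ∫ y, y i ∂gaussP N σ x = x i :=
    integral_eval.trans integral_id_gaussianReal
  have hzero (i : Fin N) : (fun y ↦ est y i - y i) =ᵐ[volume] 0 := by
    refine ae_eq_zero_of_forall_integral_pi_gaussianReal_eq_zero (fun _ ↦ hv)
      (fun x ↦ (hest x i).1.sub (hcoord x i)) fun x ↦ ?_
    exact (integral_sub (hest x i).1 (hcoord x i)).trans
      (sub_eq_zero.2 ((hest x i).2.trans (hmean x i).symm))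
  filter_upwards [ae_all_iff.2 hzero] with y hy
  exact funext fun i ↦ sub_eq_zero.1 (hy i)

/-- For `S = N`, any measurable unbiased estimator with bounded MSE coincides with the
least-squares estimator `x̂_LS(y) = y` Lebesgue-almost everywhere. -/
theorem stmt_0 (N : ℕ) (hN : 1 ≤ N) (σ : ℝ) (hσ : 0 < σ)
    (est : (Fin N → ℝ) → Fin N → ℝ) (hmeas : Measurable est)
    (hunb : Unbiased N N σ est)
    (hbdd : ∃ C : ℝ, ∀ x : Fin N → ℝ, MSE N σ est x ≤ ENNReal.ofReal C) :
    ∀ᵐ y ∂(MeasureTheory.volume : Measure (Fin N → ℝ)), est y = y :=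
  stmt_0_general N σ hσ.ne' est hunb
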